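/- Let A be an infinite subset of the prime numbers whose natural density in the primes exists and equals θ ∈ (0,1], let p_{1;A} < p_{2;A} < ⋯ be the enumeration of A in increasing order, and for M ∈ ℕ with M ≥ p_{1;A} let N⁺(M) = max{n : p_{n;A} ≤ M}. Then H_M := ∑_{n with p_{N⁺(M);A} < n ≤ M, every prime factor of n lies in A} 1/n satisfies H_M ≤ log( p_{N⁺(M)+1;A} / p_{N⁺(M);A} ), and H_M → 0 as M → ∞. -/

import Mathlib

open Filter
open scoped Classical

/-! Since `ζ` has no zeros on `re s = 1`, the Dirichlet series `∑ (Λ n - 1) / n ^ s`, which is minus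
the logarithmic derivative of `ζ` minus `ζ` itself, extends continuously to `re s ≥ 1`. Its Fejér
means on the line `re s = 1` are sums of `(Λ n - 1) / n` smoothed around `n = x`, and they tend to
`0` as `x → ∞` by the Riemann-Lebesgue lemma. The Chebyshev bound makes the contribution of `n` far
from `x` negligible, so each interval `(x, l x]` with `l > 1` carries a number of primes at least
proportional to the number of primes up to `x`.

A gap of `A` from `P` to `M ≥ l P` would thus leave the counting function of `A` constant while that
of the primes grows by a factor `1 + δ`, which contradicts the existence of a positive density.
Hence `M / P → 1` for the largest `P ∈ A` up to `M`, and `H M ≤ ∑_{P < n ≤ M} 1 / n ≤ log (M / P)`.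
-/

namespace PrimeGaps

open Complex Finset Topology
open ArithmeticFunction (vonMangoldt)

section FejerKernel

/-- The Fejér kernel `(1 - cos (T * v)) / (T * v ^ 2)`, written as the Fourier transform of a
triangle function so that its spectrum is confined to `[-T, T]`. -/
noncomputable def fejerKernel (T v : ℝ) : ℝ :=
  ∫ t in (0 : ℝ)..T, (1 - t / T) * Real.cos (t * v)

variable {T v : ℝ}

theorem fejerKernel_eq (hT : 0 < T) (hv : v ≠ 0) :
    fejerKernel T v = (1 - Real.cos (T * v)) / (T * v ^ 2) := by
  have hderiv : ∀ t ∈ Set.uIcc 0 T, HasDerivAt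
      (fun t ↦ (1 - t / T) * (Real.sin (t * v) / v) - Real.cos (t * v) / (T * v ^ 2))
      ((1 - t / T) * Real.cos (t * v)) t := by
    intro t _
    have hmul : HasDerivAt (fun t : ℝ ↦ t * v) v t := by simpa using (hasDerivAt_id t).mul_const v
    have htri : HasDerivAt (fun t : ℝ ↦ 1 - t / T) (-(1 / T)) t := by
      simpa using ((hasDerivAt_id t).div_const T).const_sub 1
    convert! (htri.mul (hmul.sin.div_const v)).sub (hmul.cos.div_const (T * v ^ 2)) using 1
    field_simp
    ring
  rw [fejerKernel, intervalIntegral.integral_eq_sub_of_hasDerivAt hderiv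
    (Continuous.intervalIntegrable (by fun_prop) _ _), div_self hT.ne']
  simp only [sub_self, zero_mul, zero_sub, zero_div, sub_zero, Real.sin_zero, Real.cos_zero,
    mul_zero]
  ring

theorem integral_one_sub_div (hT : 0 < T) : ∫ t in (0 : ℝ)..T, (1 - t / T) = T / 2 := by
  rw [intervalIntegral.integral_sub intervalIntegrable_const
    (Continuous.intervalIntegrable (by fun_prop) _ _), intervalIntegral.integral_div]
  simp only [intervalIntegral.integral_const, integral_id, smul_eq_mul]
  field_simp
  ring

theorem fejerKernel_nonneg (hT : 0 < T) (v : ℝ) : 0 ≤ fejerKernel T v := by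
  rcases eq_or_ne v 0 with rfl | hv
  · simp only [fejerKernel, mul_zero, Real.cos_zero, mul_one, integral_one_sub_div hT]
    positivity
  · rw [fejerKernel_eq hT hv]
    exact div_nonneg (sub_nonneg.2 (Real.cos_le_one _)) (by positivity)

theorem fejerKernel_le (hT : 0 < T) (v : ℝ) : fejerKernel T v ≤ T := by
  calc fejerKernel T v ≤ ∫ t in (0 : ℝ)..T, (1 - t / T) := by
        refine intervalIntegral.integral_mono_on hT.le
          (Continuous.intervalIntegrable (by fun_prop) _ _)
          (Continuous.intervalIntegrable (by fun_prop) _ _) fun t ht ↦ ?_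
        exact mul_le_of_le_one_right (sub_nonneg.2 ((div_le_one hT).2 ht.2)) (Real.cos_le_one _)
    _ = T / 2 := integral_one_sub_div hT
    _ ≤ T := by linarith

theorem div_four_le_fejerKernel (hT : 0 < T) (hv : |v| ≤ 1 / T) : T / 4 ≤ fejerKernel T v := by
  calc T / 4 = ∫ t in (0 : ℝ)..T, (1 - t / T) * (1 / 2) := by
        rw [intervalIntegral.integral_mul_const, integral_one_sub_div hT]; ring
    _ ≤ fejerKernel T v := by
        refine intervalIntegral.integral_mono_on hT.le
          (Continuous.intervalIntegrable (by fun_prop) _ _)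
          (Continuous.intervalIntegrable (by fun_prop) _ _) fun t ht ↦ ?_
        refine mul_le_mul_of_nonneg_left ?_ (sub_nonneg.2 ((div_le_one hT).2 ht.2))
        have htv : |t * v| ≤ 1 := by
          rw [abs_mul, abs_of_nonneg ht.1]
          calc t * |v| ≤ T * (1 / T) := by gcongr; exact ht.2
            _ = 1 := mul_one_div_cancel hT.ne'
        linarith [Real.one_sub_sq_div_two_le_cos (x := t * v), (sq_le_one_iff_abs_le_one _).2 htv]

theorem fejerKernel_le_of_le_abs {ε : ℝ} (hT : 0 < T) (hε : 0 < ε) (hv : ε ≤ |v|) :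
    fejerKernel T v ≤ 2 * (1 + 1 / ε ^ 2) / T * (1 / (1 + v ^ 2)) := by
  have hv0 : v ≠ 0 := abs_pos.1 (hε.trans_le hv)
  have hsq : ε ^ 2 ≤ v ^ 2 := sq_le_sq.2 (by rwa [abs_of_pos hε])
  have hone : 1 + v ^ 2 ≤ (1 + 1 / ε ^ 2) * v ^ 2 := by
    have : 1 ≤ 1 / ε ^ 2 * v ^ 2 := by rwa [one_div_mul_eq_div, one_le_div (by positivity)]
    linarith
  calc fejerKernel T v ≤ 2 / (T * v ^ 2) := by
        rw [fejerKernel_eq hT hv0]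
        gcongr
        linarith [Real.neg_one_le_cos (T * v)]
    _ ≤ 2 / (T * ((1 + v ^ 2) / (1 + 1 / ε ^ 2))) := by
        gcongr
        rwa [div_le_iff₀' (by positivity)]
    _ = 2 * (1 + 1 / ε ^ 2) / T * (1 / (1 + v ^ 2)) := by field_simp

theorem re_integral_mul_exp_eq_fejerKernel (T v : ℝ) :
    (∫ t in (0 : ℝ)..T, ((1 - t / T : ℝ) : ℂ) * exp (t * v * I)).re = fejerKernel T v := by
  have hcomm := reCLM.intervalIntegral_comp_comm (μ := MeasureTheory.volume)
    (Continuous.intervalIntegrable (u := fun t : ℝ ↦ ((1 - t / T : ℝ) : ℂ) * exp (t * v * I))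
      (by fun_prop) 0 T)
  rw [← reCLM_apply, ← hcomm, fejerKernel]
  refine intervalIntegral.integral_congr fun t _ ↦ ?_
  rw [reCLM_apply, re_ofReal_mul, ← ofReal_mul, exp_ofReal_mul_I_re]

end FejerKernel

section FejerMean

/-- The Fejér mean at frequency `u` of `F` along the vertical line of abscissa `σ`. For the sum `F`
of a Dirichlet series it is the sum of the coefficients near `exp u` smoothed by the Fejér
kernel, see `hasSum_mul_fejerKernel`. -/
noncomputable def fejerMean (F : ℂ → ℂ) (T σ u : ℝ) : ℝ :=
  (∫ t in (0 : ℝ)..T, ((1 - t / T : ℝ) : ℂ) * exp (t * u * I) * F (σ + t * I)).re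

theorem exp_mul_LSeries_term (c : ℕ → ℂ) {σ : ℝ} (hσ : σ ≠ 0) (t u : ℝ) (n : ℕ) :
    exp (t * u * I) * LSeries.term c (σ + t * I) n =
      c n * ((n : ℝ) ^ (-σ) : ℝ) * exp (t * (u - Real.log n : ℝ) * I) := by
  rcases eq_or_ne n 0 with rfl | hn
  · simp [Real.zero_rpow (neg_ne_zero.2 hσ)]
  have hpow : (((n : ℝ) ^ (-σ) : ℝ) : ℂ) = exp (Real.log n * -σ) := by
    rw [Real.rpow_def_of_pos (by positivity)]
    push_cast
    rfl
  have hcpow : ((n : ℂ) ^ ((σ : ℂ) + t * I))⁻¹ =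
      exp (Real.log n * -σ) * exp (-(t * Real.log n * I)) := by
    rw [← cpow_neg, cpow_def_of_ne_zero (Nat.cast_ne_zero.2 hn), ← natCast_log, ← exp_add]
    ring_nf
  have hsplit : exp (t * (u - Real.log n : ℝ) * I) =
      exp (t * u * I) * exp (-(t * Real.log n * I)) := by
    rw [← exp_add]
    push_cast
    ring_nf
  rw [LSeries.term_of_ne_zero hn, div_eq_mul_inv, hcpow, hpow, hsplit]
  ring

theorem hasSum_mul_fejerKernel {c : ℕ → ℝ} {F : ℂ → ℂ} {T σ : ℝ} (hT : 0 < T) (hσ : σ ≠ 0)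
    (hF : ∀ s : ℂ, s.re = σ → LSeriesHasSum (fun n ↦ (c n : ℂ)) s (F s)) (u : ℝ) :
    HasSum (fun n : ℕ ↦ c n * (n : ℝ) ^ (-σ) * fejerKernel T (u - Real.log n))
      (fejerMean F T σ u) := by
  set f : ℕ → ℝ → ℂ := fun n t ↦ ((1 - t / T : ℝ) : ℂ) * exp (t * u * I) *
    LSeries.term (fun n ↦ (c n : ℂ)) (σ + t * I) n with hf
  have hf_eq (n : ℕ) : f n = fun t : ℝ ↦ ((c n * (n : ℝ) ^ (-σ) : ℝ) : ℂ) *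
      (((1 - t / T : ℝ) : ℂ) * exp (t * (u - Real.log n : ℝ) * I)) := by
    ext t
    simp only [hf]
    rw [mul_assoc, exp_mul_LSeries_term _ hσ]
    push_cast
    ring
  have hf_bound (n : ℕ) (t : ℝ) (ht : t ∈ Set.uIoc 0 T) :
      ‖f n t‖ ≤ ‖LSeries.term (fun n ↦ (c n : ℂ)) σ n‖ := by
    rw [Set.uIoc_of_le hT.le] at ht
    have htri : ‖((1 - t / T : ℝ) : ℂ)‖ ≤ 1 := by
      have h0 : 0 ≤ t / T := div_nonneg ht.1.le hT.le
      have h1 : t / T ≤ 1 := (div_le_one hT).2 ht.2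
      rw [norm_real, Real.norm_eq_abs, abs_le]
      constructor <;> linarith
    have hexp : ‖exp (t * u * I)‖ = 1 := by simpa using norm_exp_ofReal_mul_I (t * u)
    have hterm : ‖LSeries.term (fun n ↦ (c n : ℂ)) (σ + t * I) n‖ =
        ‖LSeries.term (fun n ↦ (c n : ℂ)) σ n‖ := by simp [LSeries.norm_term_eq]
    rw [hf, norm_mul, norm_mul, hexp, mul_one, hterm]
    exact mul_le_of_le_one_left (norm_nonneg _) htri
  have hsum : HasSum (fun n ↦ ∫ t in (0 : ℝ)..T, f n t)
      (∫ t in (0 : ℝ)..T, ((1 - t / T : ℝ) : ℂ) * exp (t * u * I) * F (σ + t * I)) := by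
    refine intervalIntegral.hasSum_integral_of_dominated_convergence
      (fun n _ ↦ ‖LSeries.term (fun n ↦ (c n : ℂ)) σ n‖)
      (fun n ↦ Continuous.aestronglyMeasurable (by rw [hf_eq]; fun_prop))
      (fun n ↦ .of_forall (hf_bound n))
      (.of_forall fun _ _ ↦ (hF σ (ofReal_re σ)).summable.norm) intervalIntegrable_const
      (.of_forall fun t _ ↦ (hF _ (by simp)).mul_left _)
  convert! hasSum_re hsum using 2 with n
  rw [hf_eq, intervalIntegral.integral_const_mul, re_ofReal_mul,
    re_integral_mul_exp_eq_fejerKernel]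

theorem tendsto_fejerMean_nhdsGT_one {F : ℂ → ℂ} (hF : ContinuousOn F {s | 1 ≤ s.re})
    (T u : ℝ) : Tendsto (fun σ ↦ fejerMean F T σ u) (𝓝[>] 1) (𝓝 (fejerMean F T 1 u)) := by
  have hF_max : Continuous fun x : ℝ × ℝ ↦ F ((max x.1 1 : ℝ) + x.2 * I) :=
    hF.comp_continuous (by fun_prop) fun x ↦ by simp
  have hmean : Continuous fun σ : ℝ ↦ fejerMean F T (max σ 1) u := by
    refine continuous_re.comp
      (intervalIntegral.continuous_parametric_intervalIntegral_of_continuous' ?_ 0 T)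
    exact Continuous.mul (by fun_prop) hF_max
  have hlim := (hmean.tendsto 1).mono_left (nhdsWithin_le_nhds (s := Set.Ioi 1))
  rw [max_self] at hlim
  refine hlim.congr' ?_
  filter_upwards [self_mem_nhdsWithin] with σ hσ
  rw [max_eq_left (le_of_lt hσ)]

theorem tendsto_integral_exp_mul_I_mul_atTop (g : ℝ → ℂ) :
    Tendsto (fun u : ℝ ↦ ∫ t : ℝ, exp (t * u * I) * g t) atTop (𝓝 0) := by
  have hscale : Tendsto (fun u : ℝ ↦ u * (-(2 * Real.pi)⁻¹)) atTop (cocompact ℝ) :=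
    (tendsto_id.atTop_mul_const_of_neg (neg_lt_zero.2 (by positivity))).mono_right
      atBot_le_cocompact
  refine ((Real.tendsto_integral_exp_smul_cocompact g).comp hscale).congr fun u ↦ ?_
  simp only [Function.comp_apply]
  congr 1 with t
  rw [Circle.smul_def, Real.fourierChar_apply, smul_eq_mul]
  congr 2
  push_cast
  field_simp

theorem tendsto_fejerMean_atTop (F : ℂ → ℂ) {T : ℝ} (hT : 0 ≤ T) (σ : ℝ) :
    Tendsto (fejerMean F T σ) atTop (𝓝 0) := by
  have hlim := (continuous_re.tendsto 0).comp (tendsto_integral_exp_mul_I_mul_atTop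
    ((Set.Ioc 0 T).indicator fun t ↦ ((1 - t / T : ℝ) : ℂ) * F (σ + t * I)))
  rw [zero_re] at hlim
  refine hlim.congr fun u ↦ ?_
  rw [fejerMean, intervalIntegral.integral_of_le hT,
    ← MeasureTheory.integral_indicator measurableSet_Ioc, Function.comp_apply]
  congr 2 with t
  by_cases ht : t ∈ Set.Ioc 0 T
  · simp only [Set.indicator_of_mem ht]
    ring
  · simp [Set.indicator_of_notMem ht]

end FejerMean
section Tauberian

theorem one_div_one_add_sq_le {x y : ℝ} (h : |x - y| ≤ 1) :
    1 / (1 + x ^ 2) ≤ 3 * (1 / (1 + y ^ 2)) := by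
  rw [mul_one_div, div_le_div_iff₀ (by positivity) (by positivity)]
  have hsq : (x - y) ^ 2 ≤ 1 := (sq_le_one_iff_abs_le_one _).2 h
  linarith [sq_nonneg (2 * x - y), sq_nonneg x]

theorem summable_one_div_one_add_int_sq : Summable fun m : ℤ ↦ 1 / (1 + (m : ℝ) ^ 2) := by
  refine Summable.of_norm_bounded_eventually (Real.summable_one_div_int_pow.2 one_lt_two) ?_
  filter_upwards [(Set.finite_singleton (0 : ℤ)).compl_mem_cofinite] with m hm
  have hm : (m : ℝ) ≠ 0 := Int.cast_ne_zero.2 hm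
  rw [Real.norm_of_nonneg (by positivity)]
  gcongr
  linarith

variable {a : ℕ → ℝ} {C : ℝ}

theorem sum_div_filter_floor_log_le (ha : ∀ n, 0 ≤ a n)
    (hC : ∀ N : ℕ, ∑ n ∈ Ioc 0 N, a n ≤ C * N) (s : Finset ℕ) (k : ℕ) :
    ∑ n ∈ s with ⌊Real.log (n : ℕ)⌋₊ = k, a n / n ≤ C * Real.exp 1 := by
  have hC0 : 0 ≤ C := by simpa using (ha 1).trans (by simpa using hC 1)
  set N := ⌊Real.exp (k + 1)⌋₊
  have hmem : ∀ n ∈ (s.filter fun n : ℕ ↦ ⌊Real.log n⌋₊ = k).erase 0,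
      Real.exp k ≤ n ∧ n ∈ Ioc 0 N := by
    intro n hn
    simp only [mem_erase, mem_filter] at hn
    obtain ⟨hn0, -, hk⟩ := hn
    have hpos : (0 : ℝ) < n := by positivity
    rw [Nat.floor_eq_iff (Real.log_natCast_nonneg n), Real.le_log_iff_exp_le hpos,
      Real.log_lt_iff_lt_exp hpos] at hk
    exact ⟨hk.1, mem_Ioc.2 ⟨Nat.pos_of_ne_zero hn0, Nat.le_floor hk.2.le⟩⟩
  calc ∑ n ∈ s with ⌊Real.log (n : ℕ)⌋₊ = k, a n / n
      = ∑ n ∈ (s.filter fun n : ℕ ↦ ⌊Real.log n⌋₊ = k).erase 0, a n / n :=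
        (sum_erase _ (by simp)).symm
    _ ≤ ∑ n ∈ (s.filter fun n : ℕ ↦ ⌊Real.log n⌋₊ = k).erase 0, a n / Real.exp k :=
        sum_le_sum fun n hn ↦
          div_le_div_of_nonneg_left (ha n) (Real.exp_pos _) (hmem n hn).1
    _ ≤ ∑ n ∈ Ioc 0 N, a n / Real.exp k :=
        sum_le_sum_of_subset_of_nonneg (fun n hn ↦ (hmem n hn).2)
          fun n _ _ ↦ div_nonneg (ha n) (Real.exp_pos _).le
    _ ≤ C * N / Real.exp k := by
        rw [← sum_div]
        gcongr
        exact hC N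
    _ ≤ C * Real.exp (k + 1) / Real.exp k := by
        gcongr
        exact Nat.floor_le (Real.exp_pos _).le
    _ = C * Real.exp 1 := by
        rw [Real.exp_add]
        field_simp

theorem exists_sum_div_mul_one_div_one_add_sq_le (ha : ∀ n, 0 ≤ a n)
    (hC : ∀ N : ℕ, ∑ n ∈ Ioc 0 N, a n ≤ C * N) :
    ∃ B : ℝ, ∀ (u : ℝ) (s : Finset ℕ),
      ∑ n ∈ s, a n / n * (1 / (1 + (u - Real.log n) ^ 2)) ≤ B := by
  have hC0 : 0 ≤ C := by simpa using (ha 1).trans (by simpa using hC 1)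
  set D := C * Real.exp 1
  set w : ℤ → ℝ := fun m ↦ 1 / (1 + (m : ℝ) ^ 2)
  refine ⟨3 * D * ∑' m, w m, fun u s ↦ ?_⟩
  have hweight (n : ℕ) :
      1 / (1 + (u - Real.log n) ^ 2) ≤ 3 * w (⌊u⌋ - ⌊Real.log n⌋₊) := by
    refine one_div_one_add_sq_le ?_
    have hfloor := Nat.floor_le (Real.log_natCast_nonneg n)
    have hfloor' := Nat.lt_floor_add_one (Real.log n)
    push_cast
    rw [abs_le]
    constructor <;> linarith [Int.floor_le u, Int.lt_floor_add_one u]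
  calc ∑ n ∈ s, a n / n * (1 / (1 + (u - Real.log n) ^ 2))
      ≤ ∑ n ∈ s, a n / n * (3 * w (⌊u⌋ - ⌊Real.log n⌋₊)) :=
        sum_le_sum fun n _ ↦
          mul_le_mul_of_nonneg_left (hweight n) (div_nonneg (ha n) n.cast_nonneg)
    _ = ∑ k ∈ s.image fun n : ℕ ↦ ⌊Real.log n⌋₊,
          (∑ n ∈ s with ⌊Real.log (n : ℕ)⌋₊ = k, a n / n) * (3 * w (⌊u⌋ - k)) := by
        rw [← sum_fiberwise_of_maps_to fun n hn ↦
          mem_image_of_mem (fun n : ℕ ↦ ⌊Real.log n⌋₊) hn]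
        refine sum_congr rfl fun k _ ↦ ?_
        rw [sum_mul]
        exact sum_congr rfl fun n hn ↦ by rw [(mem_filter.1 hn).2]
    _ ≤ ∑ k ∈ s.image fun n : ℕ ↦ ⌊Real.log n⌋₊, D * (3 * w (⌊u⌋ - k)) :=
        sum_le_sum fun k _ ↦ mul_le_mul_of_nonneg_right
          (sum_div_filter_floor_log_le ha hC s k) (by positivity)
    _ = 3 * D *
          ∑ m ∈ (s.image fun n : ℕ ↦ ⌊Real.log n⌋₊).image fun k : ℕ ↦ ⌊u⌋ - k, w m := by
        rw [sum_image (s := s.image fun n : ℕ ↦ ⌊Real.log n⌋₊) fun i _ j _ h ↦ by simpa using h,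
          mul_sum]
        exact sum_congr rfl fun _ _ ↦ by ring
    _ ≤ 3 * D * ∑' m, w m := by
        gcongr
        exact summable_one_div_one_add_int_sq.sum_le_tsum _ fun _ _ ↦ by positivity

theorem fejerKernel_log_sub_log_le {T l x : ℝ} (hT : 0 < T) (hl : 1 < l) (hx : 0 < x) {n : ℕ}
    (hn : n ≠ 0) :
    fejerKernel T (Real.log x - Real.log n) ≤
      (if n ∈ Ioc ⌊x / l⌋₊ ⌊l * x⌋₊ then T else 0) +
        2 * (1 + 1 / Real.log l ^ 2) / T * (1 / (1 + (Real.log x - Real.log n) ^ 2)) := by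
  have hl0 : 0 < l := one_pos.trans hl
  have hn0 : (0 : ℝ) < n := by positivity
  split_ifs with hmem
  · exact le_add_of_le_of_nonneg (fejerKernel_le hT _) (by positivity)
  rw [zero_add]
  refine fejerKernel_le_of_le_abs hT (Real.log_pos hl) (le_abs'.2 ?_)
  rw [mem_Ioc, not_and_or, not_lt, not_le, Nat.le_floor_iff (by positivity),
    Nat.floor_lt (by positivity)] at hmem
  rcases hmem with hle | hlt
  · right
    have hlog := Real.log_le_log hn0 hle
    rw [Real.log_div hx.ne' hl0.ne'] at hlog
    linarith
  · left
    have hlog := Real.log_le_log (by positivity) hlt.le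
    rw [Real.log_mul hl0.ne' hx.ne'] at hlog
    linarith

theorem sum_mul_rpow_mul_fejerKernel_le (ha : ∀ n, 0 ≤ a n) {T l x σ B : ℝ} (hT : 0 < T)
    (hl : 1 < l) (hx : 0 < x) (hσ : 1 ≤ σ) {s : Finset ℕ}
    (hB : ∑ n ∈ s, a n / n * (1 / (1 + (Real.log x - Real.log n) ^ 2)) ≤ B) :
    ∑ n ∈ s, a n * (n : ℝ) ^ (-σ) * fejerKernel T (Real.log x - Real.log n) ≤
      T * ∑ n ∈ Ioc ⌊x / l⌋₊ ⌊l * x⌋₊, a n / n + 2 * (1 + 1 / Real.log l ^ 2) / T * B := by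
  set near := Ioc ⌊x / l⌋₊ ⌊l * x⌋₊
  set q := 2 * (1 + 1 / Real.log l ^ 2) / T
  have hterm (n : ℕ) : a n * (n : ℝ) ^ (-σ) * fejerKernel T (Real.log x - Real.log n) ≤
      (if n ∈ near then T * (a n / n) else 0) +
        q * (a n / n * (1 / (1 + (Real.log x - Real.log n) ^ 2))) := by
    rcases eq_or_ne n 0 with rfl | hn
    · simp [Real.zero_rpow (by linarith : -σ ≠ 0)]
    have hpow : (n : ℝ) ^ (-σ) ≤ 1 / n := by
      rw [one_div, ← Real.rpow_neg_one]
      exact Real.rpow_le_rpow_of_exponent_le (Nat.one_le_cast.2 (Nat.pos_of_ne_zero hn))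
        (neg_le_neg hσ)
    calc a n * (n : ℝ) ^ (-σ) * fejerKernel T (Real.log x - Real.log n)
        ≤ a n * (1 / n) * ((if n ∈ near then T else 0) +
            q * (1 / (1 + (Real.log x - Real.log n) ^ 2))) :=
          mul_le_mul (mul_le_mul_of_nonneg_left hpow (ha n))
            (fejerKernel_log_sub_log_le hT hl hx hn) (fejerKernel_nonneg hT _)
            (mul_nonneg (ha n) (by positivity))
      _ = _ := by split_ifs <;> ring
  have hnear : ∑ n ∈ s ∩ near, a n / n ≤ ∑ n ∈ near, a n / n :=
    sum_le_sum_of_subset_of_nonneg inter_subset_right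
      fun n _ _ ↦ div_nonneg (ha n) n.cast_nonneg
  refine (sum_le_sum fun n _ ↦ hterm n).trans ?_
  rw [sum_add_distrib, sum_ite_mem, ← mul_sum, ← mul_sum]
  gcongr

theorem mul_sum_rpow_le_sum_rpow_mul_fejerKernel {T x : ℝ} (hT : 0 < T) (hx : 0 < x) (σ : ℝ)
    {s : Finset ℕ} (hs : Ioc ⌊x⌋₊ ⌊(1 + 1 / T) * x⌋₊ ⊆ s) :
    T / 4 * ∑ n ∈ Ioc ⌊x⌋₊ ⌊(1 + 1 / T) * x⌋₊, (n : ℝ) ^ (-σ) ≤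
      ∑ n ∈ s, (n : ℝ) ^ (-σ) * fejerKernel T (Real.log x - Real.log n) := by
  rw [mul_sum]
  refine (sum_le_sum fun n hn ↦ ?_).trans (sum_le_sum_of_subset_of_nonneg hs fun n _ _ ↦
    mul_nonneg (by positivity) (fejerKernel_nonneg hT _))
  rw [mem_Ioc, Nat.floor_lt hx.le, Nat.le_floor_iff (by positivity)] at hn
  have hlog_lower := Real.log_le_log hx hn.1.le
  have hlog_upper := Real.log_le_log (hx.trans hn.1) hn.2
  rw [Real.log_mul (by positivity) hx.ne'] at hlog_upper
  have hlog_one_add := Real.log_le_sub_one_of_pos (show 0 < 1 + 1 / T by positivity)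
  rw [mul_comm]
  refine mul_le_mul_of_nonneg_left (div_four_le_fejerKernel hT ?_) (by positivity)
  rw [abs_le]
  constructor <;> linarith

theorem one_div_le_sum_Ioc_rpow_neg_one {T x : ℝ} (hT : 1 ≤ T) (hx : 2 * T ≤ x) :
    1 / (4 * T) ≤ ∑ n ∈ Ioc ⌊x⌋₊ ⌊(1 + 1 / T) * x⌋₊, (n : ℝ) ^ (-1 : ℝ) := by
  have hT0 : 0 < T := one_pos.trans_le hT
  have hx0 : 0 < x := by linarith
  have hcard : x / T - 1 ≤ ((Ioc ⌊x⌋₊ ⌊(1 + 1 / T) * x⌋₊).card : ℝ) := by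
    rw [Nat.card_Ioc]
    have hsub : (⌊(1 + 1 / T) * x⌋₊ : ℝ) ≤ (⌊(1 + 1 / T) * x⌋₊ - ⌊x⌋₊ : ℕ) + ⌊x⌋₊ :=
      mod_cast le_tsub_add
    have hexpand : (1 + 1 / T) * x = x + x / T := by ring
    linarith [Nat.lt_floor_add_one ((1 + 1 / T) * x), Nat.floor_le hx0.le]
  have hT_inv : 1 / T ≤ 1 := (div_le_one hT0).2 hT
  calc 1 / (4 * T) = x / (2 * T) * (1 / (2 * x)) := by field_simp; norm_num
    _ ≤ (x / T - 1) * (1 / (2 * x)) := by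
        gcongr
        have : 1 ≤ x / (2 * T) := (one_le_div (by positivity)).2 hx
        have : x / T = 2 * (x / (2 * T)) := by field_simp
        linarith
    _ ≤ ∑ n ∈ Ioc ⌊x⌋₊ ⌊(1 + 1 / T) * x⌋₊, 1 / (2 * x) := by
        rw [sum_const, nsmul_eq_mul]
        gcongr
    _ ≤ ∑ n ∈ Ioc ⌊x⌋₊ ⌊(1 + 1 / T) * x⌋₊, (n : ℝ) ^ (-1 : ℝ) := by
        refine sum_le_sum fun n hn ↦ ?_
        rw [mem_Ioc, Nat.floor_lt hx0.le, Nat.le_floor_iff (by positivity)] at hn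
        rw [Real.rpow_neg_one, one_div]
        exact inv_anti₀ (hx0.trans hn.1) (hn.2.trans (by gcongr; linarith))

variable {F : ℂ → ℂ}

theorem fejerMean_one_le (ha : ∀ n, 0 ≤ a n) (hFc : ContinuousOn F {s | 1 ≤ s.re})
    (hF : ∀ s : ℂ, 1 < s.re → LSeriesHasSum (fun n ↦ ((a n - 1 : ℝ) : ℂ)) s (F s))
    {T l x B : ℝ} (hT : 0 < T) (hl : 1 < l) (hx : 0 < x)
    (hB : ∀ s : Finset ℕ, ∑ n ∈ s, a n / n * (1 / (1 + (Real.log x - Real.log n) ^ 2)) ≤ B) :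
    fejerMean F T 1 (Real.log x) ≤
      T * ∑ n ∈ Ioc ⌊x / l⌋₊ ⌊l * x⌋₊, a n / n + 2 * (1 + 1 / Real.log l ^ 2) / T * B -
        T / 4 * ∑ n ∈ Ioc ⌊x⌋₊ ⌊(1 + 1 / T) * x⌋₊, (n : ℝ) ^ (-1 : ℝ) := by
  set U := T * ∑ n ∈ Ioc ⌊x / l⌋₊ ⌊l * x⌋₊, a n / n + 2 * (1 + 1 / Real.log l ^ 2) / T * B
  set S := Ioc ⌊x⌋₊ ⌊(1 + 1 / T) * x⌋₊
  have hmean (σ : ℝ) (hσ : 1 < σ) :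
      fejerMean F T σ (Real.log x) ≤ U - T / 4 * ∑ n ∈ S, (n : ℝ) ^ (-σ) := by
    refine le_of_tendsto (hasSum_mul_fejerKernel (c := fun n ↦ a n - 1) hT (by linarith)
      (fun s hs ↦ hF s (by rwa [hs])) (Real.log x)) ?_
    filter_upwards [eventually_ge_atTop S] with s hs
    simp only [sub_mul, one_mul, sum_sub_distrib]
    exact sub_le_sub (sum_mul_rpow_mul_fejerKernel_le ha hT hl hx hσ.le (hB s))
      (mul_sum_rpow_le_sum_rpow_mul_fejerKernel hT hx σ hs)
  have hsum : Tendsto (fun σ : ℝ ↦ ∑ n ∈ S, (n : ℝ) ^ (-σ)) (𝓝[>] 1)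
      (𝓝 (∑ n ∈ S, (n : ℝ) ^ (-1 : ℝ))) := by
    refine tendsto_finsetSum _ fun n hn ↦ Tendsto.mono_left ?_ nhdsWithin_le_nhds
    have hn0 : (n : ℝ) ≠ 0 := Nat.cast_ne_zero.2 (Nat.ne_zero_of_lt (mem_Ioc.1 hn).1)
    exact (Real.continuous_const_rpow hn0).continuousAt.tendsto.comp tendsto_id.neg
  refine le_of_tendsto_of_tendsto (tendsto_fejerMean_nhdsGT_one hFc T _)
    (tendsto_const_nhds.sub (hsum.const_mul _)) ?_
  filter_upwards [self_mem_nhdsWithin] with σ hσ using hmean σ hσ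

theorem exists_mul_le_sum_Ioc (ha : ∀ n, 0 ≤ a n)
    (hC : ∀ N : ℕ, ∑ n ∈ Ioc 0 N, a n ≤ C * N) (hFc : ContinuousOn F {s | 1 ≤ s.re})
    (hF : ∀ s : ℂ, 1 < s.re → LSeriesHasSum (fun n ↦ ((a n - 1 : ℝ) : ℂ)) s (F s))
    {l : ℝ} (hl : 1 < l) :
    ∃ c : ℝ, 0 < c ∧ ∀ᶠ x : ℝ in atTop, c * x ≤ ∑ n ∈ Ioc ⌊x / l⌋₊ ⌊l * x⌋₊, a n := by
  have : 0 < l := one_pos.trans hl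
  obtain ⟨B, hB⟩ := exists_sum_div_mul_one_div_one_add_sq_le ha hC
  set q := 2 * (1 + 1 / Real.log l ^ 2)
  -- The far part is `q * B / T`, whereas the main term `1 / 16` does not depend on `T`.
  set T := max 1 (32 * (q * B))
  have hT1 : 1 ≤ T := le_max_left _ _
  have hT0 : 0 < T := one_pos.trans_le hT1
  have hfar : q / T * B ≤ 1 / 32 := by
    rw [div_mul_eq_mul_div, div_le_iff₀ hT0]
    linarith [le_max_right 1 (32 * (q * B))]
  have hmean := ((tendsto_fejerMean_atTop F hT0.le 1).comp Real.tendsto_log_atTop).eventually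
    (lt_mem_nhds (show -(1 / 64 : ℝ) < 0 by norm_num))
  refine ⟨1 / (64 * T * l), by positivity, ?_⟩
  filter_upwards [hmean, eventually_ge_atTop (2 * T)] with x hmean_x hx
  have hx0 : 0 < x := by linarith
  set Q := ∑ n ∈ Ioc ⌊x / l⌋₊ ⌊l * x⌋₊, a n / n
  have hmain : 1 / 16 ≤ T / 4 * ∑ n ∈ Ioc ⌊x⌋₊ ⌊(1 + 1 / T) * x⌋₊, (n : ℝ) ^ (-1 : ℝ) := by
    calc 1 / 16 = T / 4 * (1 / (4 * T)) := by field_simp; norm_num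
      _ ≤ _ := by gcongr; exact one_div_le_sum_Ioc_rpow_neg_one hT1 hx
  have hQ_lower : 1 / 64 ≤ T * Q := by
    have hle := fejerMean_one_le ha hFc hF hT0 hl hx0 (hB (Real.log x))
    rw [Function.comp_apply] at hmean_x
    linarith
  have hQ_upper : Q ≤ (∑ n ∈ Ioc ⌊x / l⌋₊ ⌊l * x⌋₊, a n) / (x / l) := by
    rw [sum_div]
    refine sum_le_sum fun n hn ↦ ?_
    rw [mem_Ioc, Nat.floor_lt (by positivity)] at hn
    exact div_le_div_of_nonneg_left (ha n) (by positivity) hn.1.le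
  calc 1 / (64 * T * l) * x = 1 / 64 / T * (x / l) := by field_simp
    _ ≤ Q * (x / l) := by
        gcongr
        rwa [div_le_iff₀' hT0]
    _ ≤ ∑ n ∈ Ioc ⌊x / l⌋₊ ⌊l * x⌋₊, a n := (le_div_iff₀ (by positivity)).1 hQ_upper

end Tauberian


section PrimeCounting

theorem exists_continuousOn_LSeriesHasSum_vonMangoldt_sub_one :
    ∃ F : ℂ → ℂ, ContinuousOn F {s | 1 ≤ s.re} ∧
      ∀ s : ℂ, 1 < s.re → LSeriesHasSum (fun n ↦ ((vonMangoldt n - 1 : ℝ) : ℂ)) s (F s) := by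
  set Z : ℂ → ℂ := DirichletCharacter.LFunctionTrivChar₁ 1 with hZ
  have hmod : DirichletCharacter.LFunctionTrivChar 1 = riemannZeta :=
    DirichletCharacter.LFunction_modOne_eq
  have hZ_diff : Differentiable ℂ Z := DirichletCharacter.differentiable_LFunctionTrivChar₁ 1
  have hZ_one : Z 1 = 1 := by simp [hZ]
  refine ⟨fun s ↦ -deriv Z s / Z s - dslope Z 1 s, .sub ?_ ?_, fun s hs ↦ ?_⟩
  · refine (DirichletCharacter.continuousOn_neg_logDeriv_LFunctionTrivChar₁ 1).mono fun s hs ↦ ?_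
    exact .inr (hmod ▸ riemannZeta_ne_zero_of_one_le_re hs)
  · exact ((continuousOn_dslope univ_mem).2 ⟨hZ_diff.continuous.continuousOn, hZ_diff 1⟩).mono
      (Set.subset_univ _)
  have hs1 : s ≠ 1 := by rintro rfl; simp at hs
  have hs_sub : s - 1 ≠ 0 := sub_ne_zero.2 hs1
  have hzeta := riemannZeta_ne_zero_of_one_le_re hs.le
  have hZ_apply : Z s = (s - 1) * riemannZeta s := by simp [hZ, Function.update_of_ne hs1]
  have hZ_deriv : deriv Z s = (s - 1) * deriv riemannZeta s + riemannZeta s := by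
    rw [hZ, DirichletCharacter.deriv_LFunctionTrivChar₁_apply_of_ne_one _ hs1, hmod]
  have hvalue : -deriv Z s / Z s - dslope Z 1 s =
      -deriv riemannZeta s / riemannZeta s - riemannZeta s := by
    rw [dslope_of_ne _ hs1, slope_def_field, hZ_deriv, hZ_apply, hZ_one]
    field_simp
    ring
  have hsum := (ArithmeticFunction.LSeriesSummable_vonMangoldt hs).LSeriesHasSum.sub
    (LSeriesSummable_one_iff.2 hs).LSeriesHasSum
  rw [ArithmeticFunction.LSeries_vonMangoldt_eq_deriv_riemannZeta_div hs,
    LSeries_one_eq_riemannZeta hs, ← hvalue] at hsum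
  convert! hsum using 1
  ext n
  simp

theorem exists_mul_le_psi_sub_psi {l : ℝ} (hl : 1 < l) :
    ∃ c : ℝ, 0 < c ∧
      ∀ᶠ x : ℝ in atTop, c * x ≤ Chebyshev.psi (l * x) - Chebyshev.psi x := by
  have hl0 : 0 ≤ l := by linarith
  obtain ⟨F, hFc, hF⟩ := exists_continuousOn_LSeriesHasSum_vonMangoldt_sub_one
  have hchebyshev (N : ℕ) : ∑ n ∈ Ioc 0 N, vonMangoldt n ≤ (Real.log 4 + 4) * N := by
    simpa [Chebyshev.psi] using Chebyshev.psi_le_const_mul_self N.cast_nonneg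
  have hl_sqrt : 1 < √l := Real.lt_sqrt_of_sq_lt (by simpa)
  obtain ⟨c, hc, hev⟩ := exists_mul_le_sum_Ioc
    (fun _ ↦ ArithmeticFunction.vonMangoldt_nonneg) hchebyshev hFc hF hl_sqrt
  refine ⟨c, hc, ?_⟩
  have hscale : Tendsto (fun x ↦ √l * x) atTop atTop :=
    tendsto_id.const_mul_atTop (one_pos.trans hl_sqrt)
  filter_upwards [hscale.eventually hev, eventually_ge_atTop 0] with x hx hx0
  rw [mul_div_cancel_left₀ x (by positivity), ← mul_assoc √l, Real.mul_self_sqrt hl0] at hx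
  have hfloor : ⌊x⌋₊ ≤ ⌊l * x⌋₊ := Nat.floor_mono (le_mul_of_one_le_left hx0 hl.le)
  have hpsi : Chebyshev.psi (l * x) =
      Chebyshev.psi x + ∑ n ∈ Ioc ⌊x⌋₊ ⌊l * x⌋₊, vonMangoldt n :=
    (sum_Ioc_consecutive _ (Nat.zero_le _) hfloor).symm
  calc c * x ≤ c * (√l * x) := by
        gcongr
        exact le_mul_of_one_le_left hx0 hl_sqrt.le
    _ ≤ ∑ n ∈ Ioc ⌊x⌋₊ ⌊l * x⌋₊, vonMangoldt n := hx
    _ = Chebyshev.psi (l * x) - Chebyshev.psi x := by rw [hpsi, add_sub_cancel_left]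

theorem exists_mul_le_theta_sub_theta {l : ℝ} (hl : 1 < l) :
    ∃ c : ℝ, 0 < c ∧
      ∀ᶠ x : ℝ in atTop, c * x ≤ Chebyshev.theta (l * x) - Chebyshev.theta x := by
  obtain ⟨c, hc, hpsi⟩ := exists_mul_le_psi_sub_psi hl
  obtain ⟨C, hC⟩ := Chebyshev.psi_sub_theta_le_mul_sqrt
  refine ⟨c / 2, by positivity, ?_⟩
  have hsqrt := Real.tendsto_sqrt_atTop.eventually_ge_atTop (2 * (C * √l) / c)
  filter_upwards [hpsi, hsqrt, eventually_ge_atTop 0] with x hx hx_sqrt hx0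
  have herror : C * √(l * x) ≤ c / 2 * x := by
    rw [div_le_iff₀' hc] at hx_sqrt
    calc C * √(l * x) = 2 * (C * √l) / 2 * √x := by
          rw [Real.sqrt_mul (by linarith)]
          ring
      _ ≤ c * √x / 2 * √x := by gcongr
      _ = c / 2 * x := by rw [div_mul_eq_mul_div, mul_assoc, Real.mul_self_sqrt hx0]; ring
  linarith [hC (l * x), Chebyshev.theta_le_psi x]

theorem theta_sub_theta_le_primeCounting_sub_mul_log {x y : ℝ} (h : x ≤ y) :
    Chebyshev.theta y - Chebyshev.theta x ≤
      ((Nat.primeCounting ⌊y⌋₊ : ℝ) - Nat.primeCounting ⌊x⌋₊) * Real.log y := by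
  have hsub := Nat.primesLE_mono (Nat.floor_mono h)
  rw [Chebyshev.theta_eq_sum_primesLE, Chebyshev.theta_eq_sum_primesLE, ← sum_sdiff hsub,
    add_sub_cancel_right, ← Nat.primesLE_card_eq_primeCounting,
    ← Nat.primesLE_card_eq_primeCounting, ← cast_card_sdiff hsub, ← nsmul_eq_mul]
  refine sum_le_card_nsmul _ _ _ fun q hq ↦ ?_
  obtain ⟨hle, hprime⟩ := Nat.mem_primesLE.1 (mem_sdiff.1 hq).1
  exact Real.log_le_log (Nat.cast_pos.2 hprime.pos) ((Nat.le_floor_iff' hprime.ne_zero).1 hle)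

theorem exists_one_add_mul_primeCounting_le {l : ℝ} (hl : 1 < l) :
    ∃ δ : ℝ, 0 < δ ∧ ∀ᶠ x : ℝ in atTop,
      (1 + δ) * Nat.primeCounting ⌊x⌋₊ ≤ Nat.primeCounting ⌊l * x⌋₊ := by
  obtain ⟨c, hc, htheta⟩ := exists_mul_le_theta_sub_theta hl
  set D := Real.log 4 + 1
  have hD : 0 < D := by positivity
  refine ⟨c / (2 * D), by positivity, ?_⟩
  filter_upwards [htheta, Chebyshev.eventually_primeCounting_le one_pos, eventually_ge_atTop l]
    with x hx hchebyshev hlx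
  have hx0 : 0 < x := by linarith
  have hlog : 0 < Real.log x := Real.log_pos (by linarith)
  have hx_le : x ≤ l * x := le_mul_of_one_le_left hx0.le hl.le
  have hlog_le : Real.log (l * x) ≤ 2 * Real.log x := by
    rw [Real.log_mul (by positivity) hx0.ne', two_mul]
    gcongr
  have hmono : (Nat.primeCounting ⌊x⌋₊ : ℝ) ≤ Nat.primeCounting ⌊l * x⌋₊ :=
    mod_cast Nat.monotone_primeCounting (Nat.floor_mono hx_le)
  have hdiff : c * x ≤
      ((Nat.primeCounting ⌊l * x⌋₊ : ℝ) - Nat.primeCounting ⌊x⌋₊) * (2 * Real.log x) :=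
    (hx.trans (theta_sub_theta_le_primeCounting_sub_mul_log hx_le)).trans
      (mul_le_mul_of_nonneg_left hlog_le (sub_nonneg.2 hmono))
  rw [one_add_mul, ← le_sub_iff_add_le']
  calc c / (2 * D) * Nat.primeCounting ⌊x⌋₊ ≤ c / (2 * D) * (D * x / Real.log x) := by gcongr
    _ = c * x / (2 * Real.log x) := by field_simp
    _ ≤ _ := by rwa [div_le_iff₀ (by positivity)]

end PrimeCounting

section RelativeDensity

theorem ncard_setOf_prime_inter_Icc_one (N : ℕ) :
    ({p : ℕ | Nat.Prime p} ∩ Set.Icc 1 N).ncard = Nat.primeCounting N := by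
  rw [← Nat.primesLE_card_eq_primeCounting, Nat.primesLE_eq_filter_Icc_one,
    ← Set.ncard_coe_finset, coe_filter]
  congr 1
  ext q
  simp [and_comm]

variable {A : Set ℕ} {θ : ℝ} {P : ℕ → ℕ}

theorem tendsto_primeCounting_div_of_ncard_eq (hθ : θ ≠ 0)
    (hdens : Tendsto (fun N : ℕ ↦ ((A ∩ Set.Icc 1 N).ncard : ℝ) / Nat.primeCounting N)
      atTop (𝓝 θ))
    (hP : Tendsto P atTop atTop)
    (hcard : ∀ᶠ M in atTop, (A ∩ Set.Icc 1 (P M)).ncard = (A ∩ Set.Icc 1 M).ncard) :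
    Tendsto (fun M ↦ (Nat.primeCounting M : ℝ) / Nat.primeCounting (P M)) atTop (𝓝 1) := by
  have hratio := (hdens.comp hP).div hdens hθ
  rw [div_self hθ] at hratio
  refine hratio.congr' ?_
  filter_upwards [hcard, hdens.eventually_ne hθ] with M hM hne
  rw [Pi.div_apply, Function.comp_apply, hM, div_div_div_cancel_left' _ _ (div_ne_zero_iff.1 hne).1]

theorem eventually_lt_mul_of_tendsto_primeCounting_div (hP : Tendsto P atTop atTop)
    (hratio : Tendsto (fun M ↦ (Nat.primeCounting M : ℝ) / Nat.primeCounting (P M)) atTop (𝓝 1))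
    {l : ℝ} (hl : 1 < l) : ∀ᶠ M : ℕ in atTop, (M : ℝ) < l * P M := by
  obtain ⟨δ, hδ, hprimes⟩ := exists_one_add_mul_primeCounting_le hl
  filter_upwards [(tendsto_natCast_atTop_atTop.comp hP).eventually hprimes,
    hratio.eventually_lt_const (lt_add_of_pos_right 1 hδ), hP.eventually_ge_atTop 2]
    with M hM hlt hP2
  rw [Function.comp_apply, Nat.floor_natCast] at hM
  have hpos : (0 : ℝ) < Nat.primeCounting (P M) :=
    Nat.cast_pos.2 (Nat.pos_of_ne_zero (by rw [Ne, Nat.primeCounting_eq_zero_iff]; omega))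
  rw [div_lt_iff₀ hpos] at hlt
  by_contra! hge
  have hmono : (Nat.primeCounting ⌊l * P M⌋₊ : ℝ) ≤ Nat.primeCounting M :=
    mod_cast Nat.monotone_primeCounting (Nat.floor_le_of_le hge)
  linarith

theorem tendsto_atTop_of_isGreatest (hA : A.Infinite)
    (hmax : ∀ᶠ M in atTop, IsGreatest (A ∩ Set.Iic M) (P M)) : Tendsto P atTop atTop := by
  refine tendsto_atTop.2 fun K ↦ ?_
  obtain ⟨q, hq, hKq⟩ := hA.exists_gt K
  filter_upwards [hmax, eventually_ge_atTop q] with M hM hqM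
  exact hKq.le.trans (hM.2 ⟨hq, hqM⟩)

theorem tendsto_natCast_div_of_isGreatest (hA : A.Infinite) (hθ : θ ≠ 0)
    (hdens : Tendsto (fun N : ℕ ↦ ((A ∩ Set.Icc 1 N).ncard : ℝ) / Nat.primeCounting N)
      atTop (𝓝 θ))
    (hmax : ∀ᶠ M in atTop, IsGreatest (A ∩ Set.Iic M) (P M)) :
    Tendsto (fun M : ℕ ↦ (M : ℝ) / P M) atTop (𝓝 1) := by
  have hP := tendsto_atTop_of_isGreatest hA hmax
  have hcard : ∀ᶠ M in atTop, (A ∩ Set.Icc 1 (P M)).ncard = (A ∩ Set.Icc 1 M).ncard := by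
    filter_upwards [hmax] with M hM
    congr 1
    ext q
    exact ⟨fun ⟨hq, h1, hqP⟩ ↦ ⟨hq, h1, hqP.trans hM.1.2⟩, fun ⟨hq, h1, hqM⟩ ↦
      ⟨hq, h1, hM.2 ⟨hq, hqM⟩⟩⟩
  have hratio := tendsto_primeCounting_div_of_ncard_eq hθ hdens hP hcard
  refine tendsto_order.2 ⟨fun l hl ↦ ?_, fun l hl ↦ ?_⟩
  · filter_upwards [hmax, hP.eventually_gt_atTop 0] with M hM hP0
    exact hl.trans_le ((one_le_div (Nat.cast_pos.2 hP0)).2 (Nat.cast_le.2 hM.1.2))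
  · filter_upwards [eventually_lt_mul_of_tendsto_primeCounting_div hP hratio hl,
      hP.eventually_gt_atTop 0] with M hM hP0
    rwa [div_lt_iff₀ (Nat.cast_pos.2 hP0)]

end RelativeDensity

theorem sum_Ioc_one_div_le_log {P M : ℕ} (hP : P ≠ 0) (h : P ≤ M) :
    ∑ n ∈ Ioc P M, (1 : ℝ) / n ≤ Real.log (M / P) := by
  have hP0 : (0 : ℝ) < P := by positivity
  have hanti : AntitoneOn (fun x : ℝ ↦ 1 / x) (Set.Icc P M) := fun x hx y _ hxy ↦
    one_div_le_one_div_of_le (hP0.trans_le hx.1) hxy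
  calc ∑ n ∈ Ioc P M, (1 : ℝ) / n = ∑ n ∈ Ico P M, 1 / ((n + 1 : ℕ) : ℝ) := by
        rw [sum_Ico_add' (fun n : ℕ ↦ (1 : ℝ) / n), Ico_add_one_add_one_eq_Ioc]
    _ ≤ ∫ x in (P : ℝ)..M, 1 / x := hanti.sum_le_integral_Ico h
    _ = Real.log (M / P) := integral_one_div_of_pos hP0 (hP0.trans_le (Nat.cast_le.2 h))

theorem sum_Ioc_ite_one_div_le_log (B : Set ℕ) {P M : ℕ} (hP : P ≠ 0) (h : P ≤ M) :
    ∑ n ∈ Ioc P M, (if n ∈ B then (1 : ℝ) / n else 0) ≤ Real.log (M / P) := by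
  refine (sum_le_sum fun n _ ↦ ?_).trans (sum_Ioc_one_div_le_log hP h)
  split_ifs
  · exact le_rfl
  · positivity

end PrimeGaps

theorem tail_harmonic_sum_small_general
    (A : Set ℕ) (hA : 0 ∉ A) (θ : ℝ) (hθ : θ ≠ 0)
    (hdens : Tendsto
      (fun N : ℕ => ((A ∩ Set.Icc 1 N).ncard : ℝ) /
        (({p : ℕ | Nat.Prime p} ∩ Set.Icc 1 N).ncard : ℝ))
      atTop (nhds θ))
    (p : ℕ → ℕ)
    (hmono : StrictMonoOn p {j : ℕ | 1 ≤ j})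
    (hmem : ∀ j : ℕ, 1 ≤ j → p j ∈ A)
    (hsurj : ∀ q ∈ A, ∃ j : ℕ, 1 ≤ j ∧ p j = q)
    (Nplus : ℕ → ℕ)
    (hNplus : ∀ M : ℕ, p 1 ≤ M →
      1 ≤ Nplus M ∧ p (Nplus M) ≤ M ∧ ∀ n : ℕ, 1 ≤ n → p n ≤ M → n ≤ Nplus M)
    (B : Set ℕ) (H : ℕ → ℝ)
    (hH : ∀ M : ℕ, H M =
      ∑ n ∈ Finset.Ioc (p (Nplus M)) M, if n ∈ B then (1 : ℝ) / (n : ℝ) else 0) :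
    (∀ M : ℕ, p 1 ≤ M →
      H M ≤ Real.log ((p (Nplus M + 1) : ℝ) / (p (Nplus M) : ℝ)))
    ∧ Tendsto H atTop (nhds 0) := by
  have hp (j : ℕ) (hj : 1 ≤ j) : 0 < p j := Nat.pos_of_ne_zero fun h ↦ hA (h ▸ hmem j hj)
  have hA_inf : A.Infinite :=
    Set.infinite_of_injOn_mapsTo hmono.injOn hmem (Set.Ici_infinite 1)
  have hgreatest (M : ℕ) (hM : p 1 ≤ M) : IsGreatest (A ∩ Set.Iic M) (p (Nplus M)) := by
    obtain ⟨hN1, hNM, hmax⟩ := hNplus M hM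
    refine ⟨⟨hmem _ hN1, hNM⟩, fun q ⟨hq, hqM⟩ ↦ ?_⟩
    obtain ⟨j, hj, rfl⟩ := hsurj q hq
    exact hmono.monotoneOn hj hN1 (hmax j hj hqM)
  have hlog (M : ℕ) (hM : p 1 ≤ M) : H M ≤ Real.log (M / p (Nplus M)) :=
    hH M ▸ PrimeGaps.sum_Ioc_ite_one_div_le_log B (hp _ (hNplus M hM).1).ne' (hNplus M hM).2.1
  refine ⟨fun M hM ↦ (hlog M hM).trans ?_, ?_⟩
  · obtain ⟨hN1, hNM, hmax⟩ := hNplus M hM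
    have hlt : M < p (Nplus M + 1) := by
      by_contra! hle
      exact (Nat.lt_succ_self _).not_ge (hmax _ (by omega) hle)
    have hP0 := hp _ hN1
    have hM0 : 0 < M := hP0.trans_le hNM
    gcongr
  · simp only [PrimeGaps.ncard_setOf_prime_inter_Icc_one] at hdens
    have hratio := PrimeGaps.tendsto_natCast_div_of_isGreatest hA_inf hθ hdens
      ((eventually_ge_atTop (p 1)).mono hgreatest)
    refine squeeze_zero' (.of_forall fun M ↦ ?_) ((eventually_ge_atTop (p 1)).mono hlog)
      (Real.log_one ▸ hratio.log one_ne_zero)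
    rw [hH]
    exact Finset.sum_nonneg fun n _ ↦ by split_ifs <;> positivity

/-- If `A` is an infinite set of primes with natural density `θ ∈ (0,1]` within the primes,
enumerated in increasing order as `p 1 < p 2 < ⋯`, and for `M ≥ p 1` the index
`Nplus M = max {n : p n ≤ M}`, then the tail sum
`H M = ∑_{p (Nplus M) < n ≤ M, all prime factors of n in A} 1/n` satisfies
`H M ≤ log (p (Nplus M + 1) / p (Nplus M))` and `H M → 0` as `M → ∞`. -/
theorem tail_harmonic_sum_small
    (A : Set ℕ) (hA : ∀ p ∈ A, Nat.Prime p) (hAinf : A.Infinite)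
    (θ : ℝ) (hθ : θ ∈ Set.Ioc (0 : ℝ) 1)
    (hdens : Tendsto
      (fun N : ℕ => ((A ∩ Set.Icc 1 N).ncard : ℝ) / (({p : ℕ | Nat.Prime p} ∩ Set.Icc 1 N).ncard : ℝ))
      atTop (nhds θ))
    (p : ℕ → ℕ)
    (hmono : StrictMonoOn p {j : ℕ | 1 ≤ j})
    (hmem : ∀ j : ℕ, 1 ≤ j → p j ∈ A)
    (hsurj : ∀ q ∈ A, ∃ j : ℕ, 1 ≤ j ∧ p j = q)
    (Nplus : ℕ → ℕ)
    (hNplus : ∀ M : ℕ, p 1 ≤ M →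
      1 ≤ Nplus M ∧ p (Nplus M) ≤ M ∧ ∀ n : ℕ, 1 ≤ n → p n ≤ M → n ≤ Nplus M)
    (H : ℕ → ℝ)
    (hH : ∀ M : ℕ, H M =
      ∑ n ∈ Finset.Ioc (p (Nplus M)) M,
        if ∀ q : ℕ, q.Prime → q ∣ n → q ∈ A then (1 : ℝ) / (n : ℝ) else 0) :
    (∀ M : ℕ, p 1 ≤ M →
      H M ≤ Real.log ((p (Nplus M + 1) : ℝ) / (p (Nplus M) : ℝ)))
    ∧ Tendsto H atTop (nhds 0) :=
  tail_harmonic_sum_small_general A (fun h ↦ Nat.not_prime_zero (hA 0 h)) θ hθ.1.ne' hdens p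
    hmono hmem hsurj Nplus hNplus {n | ∀ q : ℕ, q.Prime → q ∣ n → q ∈ A} H hH
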